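/- arXiv:2408.13183 — 5 statements merged into one kernel-verified Lean document; each statement's English description precedes it below -/
import Mathlib

section
/- Let H ≥ 1, n ≥ 1, and let x^1, …, x^n : Fin H → ℝ be sample paths such that for every t the values x^1_t, …, x^n_t are pairwise distinct. Let q^u, q^l ∈ ℝ^H and let m be an integer with 1 ≤ m ≤ n. Assume the band (q^l, q^u) covers strictly fewer than m of the n sample paths. Let (l̂, û) be an optimal solution of (NP), i.e., (l̂, û) is feasible for (NP) and its width Σ_t (û_t − l̂_t) is minimal among all feasible bands. Then the number of sample paths covered by (l̂, û) equals exactly m. -/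
/-!
If an optimal band covered more than `m` paths, none of its bounds could be loose. Suppose
`qu t < u t` at some time `t`. By distinctness, at most one covered path attains the largest covered
value at time `t`; all the others lie strictly below `u t`, and there are still at least `m` of them.
So `u t` can be lowered to the larger of `qu t` and the second largest covered value, giving a
strictly narrower feasible band (`exists_lower_upper_bound`). The lower bound is handled by negating
all paths (`coverCount_neg`). Hence the optimal band would be `(ql, qu)` itself, which covers fewer
than `m` paths.
-/

/-- The number of the `n` sample paths `x 0, …, x (n-1)` covered by the band `(l, u)`:
a path `x i` is covered if `l t ≤ x i t ≤ u t` for all `t`. -/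
noncomputable def coverCount {H n : ℕ} (x : Fin n → Fin H → ℝ) (l u : Fin H → ℝ) : ℕ :=
  Nat.card {i : Fin n // ∀ t, l t ≤ x i t ∧ x i t ≤ u t}

lemma coverCount_eq_card_filter {H n : ℕ} (x : Fin n → Fin H → ℝ) (l u : Fin H → ℝ) :
    coverCount x l u
      = (Finset.univ.filter fun i : Fin n => ∀ t, l t ≤ x i t ∧ x i t ≤ u t).card := by
  classical
  rw [coverCount, Nat.card_eq_fintype_card, Fintype.card_subtype]

lemma coverCount_neg {H n : ℕ} (x : Fin n → Fin H → ℝ) (l u : Fin H → ℝ) :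
    coverCount (-x) (-u) (-l) = coverCount x l u := by
  simp only [coverCount_eq_card_filter, Pi.neg_apply, neg_le_neg_iff, and_comm]

/-- A band covering more than `m ≥ 1` paths whose upper bound is loose at time `t` can be narrowed
at `t` from above while still covering `m` paths. The lower bound `l` is unchanged. -/
lemma exists_lower_upper_bound {H n : ℕ} (x : Fin n → Fin H → ℝ) (l u qu : Fin H → ℝ)
    {m : ℕ} (hm : 1 ≤ m) (t : Fin H) (hinj : Function.Injective fun i => x i t)
    (hqu : ∀ s, qu s ≤ u s) (ht : qu t < u t) (hcov : m < coverCount x l u) :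
    ∃ u' : Fin H → ℝ, (∀ s, qu s ≤ u' s) ∧ (∀ s, u' s ≤ u s) ∧ u' t < u t ∧
      m ≤ coverCount x l u' := by
  classical
  rw [coverCount_eq_card_filter] at hcov
  set S := Finset.univ.filter fun i : Fin n => ∀ s, l s ≤ x i s ∧ x i s ≤ u s with hS
  have hmem : ∀ i ∈ S, ∀ s, l s ≤ x i s ∧ x i s ≤ u s := fun i hi => (Finset.mem_filter.1 hi).2
  -- `i₀` is the top covered path at time `t`, and `i₁` the second one.
  obtain ⟨i₀, hi₀, hmax₀⟩ := S.exists_max_image (fun i => x i t) (Finset.card_pos.1 (by omega))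
  have hcard : m ≤ (S.erase i₀).card := by rw [Finset.card_erase_of_mem hi₀]; omega
  obtain ⟨i₁, hi₁, hmax₁⟩ :=
    (S.erase i₀).exists_max_image (fun i => x i t) (Finset.card_pos.1 (by omega))
  have hlt : x i₁ t < u t := by
    obtain ⟨hne, hi₁S⟩ := Finset.mem_erase.1 hi₁
    exact (lt_of_le_of_ne (hmax₀ i₁ hi₁S) fun h => hne (hinj h)).trans_le (hmem i₀ hi₀ t).2
  have hv : max (qu t) (x i₁ t) < u t := max_lt ht hlt
  refine ⟨Function.update u t (max (qu t) (x i₁ t)), fun s => ?_, fun s => ?_, by simpa using hv, ?_⟩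
  · obtain rfl | hs := eq_or_ne s t
    · simp
    · simpa [hs] using hqu s
  · obtain rfl | hs := eq_or_ne s t
    · simpa using hv.le
    · simp [hs]
  · rw [coverCount_eq_card_filter]
    refine hcard.trans (Finset.card_le_card fun i hi => ?_)
    have hiS := hmem i (Finset.mem_of_mem_erase hi)
    refine Finset.mem_filter.2 ⟨Finset.mem_univ i, fun s => ⟨(hiS s).1, ?_⟩⟩
    obtain rfl | hs := eq_or_ne s t
    · simpa using Or.inr (hmax₁ i hi)
    · simpa [hs] using (hiS s).2

/-- **Lemma 1.** If the sample-path values are pairwise distinct at every time,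
the quantile band `(qˡ, qᵘ)` covers strictly fewer than `m` of the `n` paths, and
`(l̂, û)` is an optimal solution of the nominal problem (NP) — feasible of minimal
width — then `(l̂, û)` covers exactly `m` sample paths. -/
theorem nominal_optimal_band_covers_exactly_m
    (H n : ℕ) (hH : 1 ≤ H) (hn : 1 ≤ n)
    (x : Fin n → Fin H → ℝ)
    (hdist : ∀ t : Fin H, Function.Injective fun i => x i t)
    (qu ql : Fin H → ℝ) (m : ℕ) (hm1 : 1 ≤ m) (hmn : m ≤ n)
    (hq : coverCount x ql qu < m)
    (lhat uhat : Fin H → ℝ)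
    (hfeas : (∀ t, qu t ≤ uhat t) ∧ (∀ t, lhat t ≤ ql t) ∧ m ≤ coverCount x lhat uhat)
    (hopt : ∀ l u : Fin H → ℝ,
      ((∀ t, qu t ≤ u t) ∧ (∀ t, l t ≤ ql t) ∧ m ≤ coverCount x l u) →
      ∑ t, (uhat t - lhat t) ≤ ∑ t, (u t - l t)) :
    coverCount x lhat uhat = m := by
  obtain ⟨hu, hl, hcov⟩ := hfeas
  by_contra hne
  have hgt : m < coverCount x lhat uhat := lt_of_le_of_ne hcov (Ne.symm hne)
  have hU : uhat = qu := by
    funext t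
    by_contra hut
    obtain ⟨u', h1, h2, h3, h4⟩ := exists_lower_upper_bound x lhat uhat qu hm1 t (hdist t) hu
      (lt_of_le_of_ne (hu t) (Ne.symm hut)) hgt
    refine (hopt lhat u' ⟨h1, hl, h4⟩).not_gt (Finset.sum_lt_sum (fun s _ => ?_)
      ⟨t, Finset.mem_univ t, ?_⟩)
    · linarith [h2 s]
    · linarith
  have hL : lhat = ql := by
    funext t
    by_contra hlt
    obtain ⟨l', h1, h2, h3, h4⟩ := exists_lower_upper_bound (-x) (-uhat) (-lhat) (-ql) hm1 t
      (fun i j hij => hdist t (neg_injective hij)) (fun s => neg_le_neg (hl s))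
      (neg_lt_neg (lt_of_le_of_ne (hl t) hlt)) (by rwa [coverCount_neg])
    simp only [Pi.neg_apply] at h1 h2 h3
    rw [← neg_neg l', coverCount_neg] at h4
    refine (hopt (-l') uhat ⟨hu, fun s => ?_, h4⟩).not_gt (Finset.sum_lt_sum (fun s _ => ?_)
      ⟨t, Finset.mem_univ t, ?_⟩)
    · simp only [Pi.neg_apply]; linarith [h1 s]
    · simp only [Pi.neg_apply]; linarith [h2 s]
    · simp only [Pi.neg_apply]; linarith
  rw [hU, hL] at hgt
  exact absurd hgt hq.not_gt
end

section
/- Let H ≥ 1, let c : Fin H → ℝ with c_t > 0 for all t, and let σ be a permutation of Fin H such that c∘σ is nonincreasing; write c_(j) = c(σ(j)) for the j-th largest value of c. Let Γ ∈ [0, 1] and set t* = max(⌈ΓH⌉, 1). Then the value Σ_{t=1}^H max(c_t − c_(t*), 0) + Γ·H·c_(t*) is the greatest element of the set {Σ_{t=1}^H c_t z_t : z ∈ ℝ^H, 0 ≤ z_t ≤ 1 for all t, Σ_{t=1}^H z_t ≤ ΓH}; that is, this value is attained by some feasible z and no feasible z gives a larger value. -/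
/-!
Write `B = ΓH` and `d = c (σ j)`. For feasible `z`,
`∑ c t * z t = ∑ (c t - d) * z t + d * ∑ z t`, where each `(c t - d) * z t` is at most
`max (c t - d) 0` because `z t ∈ [0,1]`, and `d * ∑ z t ≤ d * B` because `d > 0`. Both bounds are
equalities for the greedy point, which puts mass `1` on the `j` largest entries of `c` and the
remaining mass `B - j` on the next one. The choice `j + 1 = max ⌈B⌉ 1` gives `j ≤ B ≤ j + 1`,
so the greedy point is feasible.
-/

/-- The greedy allocation of budget `B` along the positions `0, 1, 2, …`: full mass before
position `j`, and the remainder at `j`. It is nonnegative with entries at most `1` exactly when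
`j ≤ B ≤ j + 1`. -/
def greedyWeight {H : ℕ} (j : Fin H) (B : ℝ) (i : Fin H) : ℝ :=
  (if i < j then 1 else 0) + (if i = j then B - (j : ℕ) else 0)

lemma sum_greedyWeight {H : ℕ} (j : Fin H) (B : ℝ) : ∑ i, greedyWeight j B i = B := by
  have h : (∑ i : Fin H, if i < j then (1 : ℝ) else 0) = (j : ℕ) := by
    rw [Finset.sum_boole, Finset.filter_gt_eq_Iio, Fin.card_Iio]
  simp only [greedyWeight, Finset.sum_add_distrib, h, Finset.sum_ite_eq', Finset.mem_univ, if_true]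
  ring

lemma greedyWeight_mem {H : ℕ} {j : Fin H} {B : ℝ} (h0 : ((j : ℕ) : ℝ) ≤ B)
    (h1 : B ≤ ((j : ℕ) : ℝ) + 1) (i : Fin H) :
    0 ≤ greedyWeight j B i ∧ greedyWeight j B i ≤ 1 := by
  unfold greedyWeight
  rcases lt_trichotomy i j with h | rfl | h
  · simp [h, h.ne]
  · simp only [lt_irrefl, if_true, if_false]
    constructor <;> linarith
  · simp [h.not_gt, h.ne']

/-- Complementary slackness for a nonincreasing `a`: the greedy weight is `1` where `a i > a j`,
and `0` where `a i < a j`. -/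
lemma sub_mul_greedyWeight {H : ℕ} {a : Fin H → ℝ} (ha : Antitone a) (j : Fin H) (B : ℝ)
    (i : Fin H) : (a i - a j) * greedyWeight j B i = max (a i - a j) 0 := by
  unfold greedyWeight
  rcases lt_trichotomy i j with h | rfl | h
  · simp [h, h.ne, ha h.le]
  · simp
  · simp [h.not_gt, h.ne', ha h.le]

/-- **Maximum of a linear function over the budget uncertainty set.** Let `c > 0`
componentwise, let `σ` be a permutation sorting `c` in nonincreasing order (so
`c (σ j)` is the `(j+1)`-th largest value), let `Γ ∈ [0,1]`, and let `j` be the index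
with `j + 1 = t* = max(⌈ΓH⌉, 1)`. Then
`∑ t, max (c t - c_(t*)) 0 + Γ·H·c_(t*)` is the greatest value of `∑ t, c t * z t`
over `z ∈ Z(Γ) = {z ∈ [0,1]^H : ∑ t, z t ≤ ΓH}`. -/
theorem budget_set_linear_max
    (H : ℕ) (hH : 1 ≤ H) (c : Fin H → ℝ) (hc : ∀ t, 0 < c t)
    (σ : Equiv.Perm (Fin H)) (hσ : Antitone (c ∘ σ))
    (Γ : ℝ) (hΓ0 : 0 ≤ Γ) (hΓ1 : Γ ≤ 1)
    (j : Fin H) (hj : (j : ℕ) + 1 = max ⌈Γ * (H : ℝ)⌉₊ 1) :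
    IsGreatest
      ((fun z : Fin H → ℝ => ∑ t, c t * z t) ''
        {z | (∀ t, 0 ≤ z t ∧ z t ≤ 1) ∧ ∑ t, z t ≤ Γ * (H : ℝ)})
      ((∑ t, max (c t - c (σ j)) 0) + Γ * (H : ℝ) * c (σ j)) := by
  have hjB : ((j : ℕ) : ℝ) ≤ Γ * H := by
    rcases Nat.eq_zero_or_pos (j : ℕ) with h | h
    · rw [h]
      simpa using mul_nonneg hΓ0 (Nat.cast_nonneg H)
    · exact (Nat.lt_ceil.1 (by omega)).le
  have hBj : Γ * H ≤ ((j : ℕ) : ℝ) + 1 := by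
    refine (Nat.le_ceil _).trans ?_
    exact_mod_cast (by omega : ⌈Γ * (H : ℝ)⌉₊ ≤ (j : ℕ) + 1)
  constructor
  · refine ⟨fun t => greedyWeight j (Γ * H) (σ.symm t),
      ⟨fun t => greedyWeight_mem hjB hBj _, ?_⟩, ?_⟩
    · rw [Equiv.sum_comp σ.symm (greedyWeight j (Γ * H)), sum_greedyWeight]
    · have hterm : ∀ t, c t * greedyWeight j (Γ * H) (σ.symm t)
          = max (c t - c (σ j)) 0 + greedyWeight j (Γ * H) (σ.symm t) * c (σ j) := by
        intro t
        have := sub_mul_greedyWeight hσ j (Γ * H) (σ.symm t)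
        simp only [Function.comp_apply, Equiv.apply_symm_apply] at this
        linarith
      simp only [hterm]
      rw [Finset.sum_add_distrib, ← Finset.sum_mul,
        Equiv.sum_comp σ.symm (greedyWeight j (Γ * H)), sum_greedyWeight]
  · rintro _ ⟨z, ⟨hz, hzB⟩, rfl⟩
    have hterm : ∀ t, c t * z t ≤ max (c t - c (σ j)) 0 + z t * c (σ j) := by
      intro t
      have h1 : (c t - c (σ j)) * z t ≤ max (c t - c (σ j)) 0 * z t :=
        mul_le_mul_of_nonneg_right (le_max_left _ _) (hz t).1
      have h2 : max (c t - c (σ j)) 0 * z t ≤ max (c t - c (σ j)) 0 :=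
        mul_le_of_le_one_right (le_max_right _ _) (hz t).2
      linarith
    refine (Finset.sum_le_sum fun t _ => hterm t).trans ?_
    rw [Finset.sum_add_distrib, ← Finset.sum_mul]
    have := mul_le_mul_of_nonneg_right hzB (hc (σ j)).le
    linarith
end

section
/- Let H ≥ 1, Γ ∈ [0, 1], and let u, q, c : Fin H → ℝ with c_t > 0 for all t. Then the following are equivalent: (i) for every z ∈ ℝ^H with 0 ≤ z_t ≤ 1 for all t and Σ_{t=1}^H z_t ≤ ΓH, one has Σ_{t=1}^H u_t ≥ Σ_{t=1}^H (q_t + c_t z_t); (ii) there exist λ ∈ ℝ^H and ρ ∈ ℝ with λ_t ≥ 0 for all t, ρ ≥ 0, λ_t + ρ ≥ c_t for all t, and Σ_{t=1}^H u_t ≥ Σ_{t=1}^H q_t + Σ_{t=1}^H λ_t + Γ·H·ρ. -/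
/-!
The uncertain cost `∑ c t * z t` over the budget set is a fractional knapsack problem. It is solved
greedily: with budget `b`, spend one unit on the largest coefficients until the budget runs out.
The coefficient `ρ` at which this happens is the price of the budget, and `λ t = max (c t - ρ) 0`
is then a dual solution with the same value as the greedy one. `exists_greedy_pair` builds this
pair of solutions with equal values; applying the robust constraint to the greedy `z` gives the
multipliers, and the converse is weak duality.
-/

/-- Strong duality for the fractional knapsack problem with item set `s` and budget `b`. The bound
`ρ ≤ M` says that the budget price never exceeds the largest coefficient; it is what lets the
induction add a new largest item without changing the price. -/
lemma exists_greedy_pair {ι : Type*} [DecidableEq ι] (c : ι → ℝ) (hc : ∀ t, 0 ≤ c t)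
    (s : Finset ι) :
    ∀ b : ℝ, 0 ≤ b → ∃ (z : ι → ℝ) (ρ : ℝ), (∀ t ∈ s, 0 ≤ z t ∧ z t ≤ 1) ∧ ∑ t ∈ s, z t ≤ b ∧
      0 ≤ ρ ∧ (∀ M, 0 ≤ M → (∀ t ∈ s, c t ≤ M) → ρ ≤ M) ∧
      ∑ t ∈ s, max (c t - ρ) 0 + b * ρ = ∑ t ∈ s, c t * z t := by
  induction s using Finset.induction_on_max_value c with
  | empty => exact fun b hb => ⟨0, 0, by simp, by simpa using hb, le_rfl, fun M hM _ => hM, by simp⟩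
  | insert a s ha hmax ih =>
    intro b hb
    have hne : ∀ t ∈ s, t ≠ a := fun t ht h => ha (h ▸ ht)
    rcases le_total 1 b with h1 | h1
    · obtain ⟨z, ρ, hz, hzb, hρ, hM, hval⟩ := ih (b - 1) (by linarith)
      have hρa : ρ ≤ c a := hM _ (hc a) hmax
      have hsum : ∑ t ∈ s, Function.update z a 1 t = ∑ t ∈ s, z t :=
        Finset.sum_congr rfl fun t ht => by simp [hne t ht]
      have hsum' : ∑ t ∈ s, c t * Function.update z a 1 t = ∑ t ∈ s, c t * z t :=
        Finset.sum_congr rfl fun t ht => by simp [hne t ht]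
      refine ⟨Function.update z a 1, ρ, ?_, ?_, hρ, ?_, ?_⟩
      · intro t ht
        rcases Finset.mem_insert.1 ht with rfl | ht
        · simp
        · simpa [hne t ht] using hz t ht
      · rw [Finset.sum_insert ha, hsum, Function.update_self]
        linarith
      · exact fun M hM0 h => hM M hM0 fun t ht => h t (Finset.mem_insert_of_mem ht)
      · rw [Finset.sum_insert ha, Finset.sum_insert ha, hsum', Function.update_self,
          max_eq_left (by linarith)]
        linarith
    -- The whole budget goes to the largest item, whose coefficient becomes the price.
    · have hsum : ∑ t ∈ s, Pi.single a b t = 0 :=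
        Finset.sum_eq_zero fun t ht => by simp [hne t ht]
      have hsum' : ∑ t ∈ s, c t * (Pi.single a b : ι → ℝ) t = 0 :=
        Finset.sum_eq_zero fun t ht => by simp [hne t ht]
      have hpos : ∑ t ∈ s, max (c t - c a) 0 = 0 :=
        Finset.sum_eq_zero fun t ht => max_eq_right (by linarith [hmax t ht])
      refine ⟨Pi.single a b, c a, ?_, ?_, hc a, ?_, ?_⟩
      · intro t ht
        rcases Finset.mem_insert.1 ht with rfl | ht
        · simpa using ⟨hb, h1⟩
        · simp [hne t ht]
      · rw [Finset.sum_insert ha, hsum, Pi.single_eq_same, add_zero]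
      · exact fun M _ h => h a (Finset.mem_insert_self a s)
      · rw [Finset.sum_insert ha, Finset.sum_insert ha, hsum', hpos, Pi.single_eq_same]
        simp [mul_comm]

/-- **Theorem of the alternative / LP duality step of Proposition 2.** For `Γ ∈ [0,1]`
and `c > 0` componentwise, the semi-infinite robust constraint
`∀ z ∈ Z(Γ), ∑ t, u t ≥ ∑ t, (q t + c t * z t)` holds if and only if there exist
multipliers `λ ≥ 0` and `ρ ≥ 0` with `λ t + ρ ≥ c t` for every `t` and
`∑ t, u t ≥ ∑ t, q t + ∑ t, λ t + Γ·H·ρ`. -/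
theorem robust_constraint_alternative
    (H : ℕ) (hH : 1 ≤ H) (Γ : ℝ) (hΓ0 : 0 ≤ Γ) (hΓ1 : Γ ≤ 1)
    (u q c : Fin H → ℝ) (hc : ∀ t, 0 < c t) :
    (∀ z : Fin H → ℝ, (∀ t, 0 ≤ z t ∧ z t ≤ 1) → ∑ t, z t ≤ Γ * (H : ℝ) →
      ∑ t, (q t + c t * z t) ≤ ∑ t, u t) ↔
    (∃ (lam : Fin H → ℝ) (ρ : ℝ),
      (∀ t, 0 ≤ lam t) ∧ 0 ≤ ρ ∧ (∀ t, c t ≤ lam t + ρ) ∧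
      (∑ t, q t) + (∑ t, lam t) + Γ * (H : ℝ) * ρ ≤ ∑ t, u t) := by
  constructor
  · intro h
    obtain ⟨z, ρ, hz, hzb, hρ, -, hval⟩ := exists_greedy_pair c (fun t => (hc t).le) Finset.univ
      (Γ * (H : ℝ)) (by positivity)
    refine ⟨fun t => max (c t - ρ) 0, ρ, fun t => le_max_right _ _, hρ, fun t => ?_, ?_⟩
    · linarith [le_max_left (c t - ρ) 0]
    · have := h z (fun t => hz t (Finset.mem_univ t)) hzb
      rw [Finset.sum_add_distrib] at this
      linarith
  · rintro ⟨lam, ρ, hlam, hρ, hcov, hu⟩ z hz hzb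
    have hterm : ∑ t, c t * z t ≤ ∑ t, (lam t + ρ * z t) :=
      Finset.sum_le_sum fun t _ => by
        nlinarith [mul_le_mul_of_nonneg_right (hcov t) (hz t).1,
          mul_le_mul_of_nonneg_left (hz t).2 (hlam t)]
    rw [Finset.sum_add_distrib, ← Finset.mul_sum] at hterm
    rw [Finset.sum_add_distrib]
    nlinarith [mul_le_mul_of_nonneg_left hzb hρ]
end

section
/- Let H ≥ 1, Γ ∈ [0, 1], let q^u, q^l : Fin H → ℝ, and let c^u, c^l : Fin H → ℝ with c^u_t > 0 and c^l_t > 0 for all t. Fix permutations σ^u, σ^l of Fin H such that c^u∘σ^u and c^l∘σ^l are nonincreasing, write c^u_(j) = c^u(σ^u(j)) and c^l_(j) = c^l(σ^l(j)), and set t* = max(⌈ΓH⌉, 1). Then a band (l, u) satisfies the robust constraints [for every z^u ∈ Z(Γ): Σ_t u_t ≥ Σ_t (q^u_t + c^u_t z^u_t)] and [for every z^l ∈ Z(Γ): Σ_t l_t ≤ Σ_t (q^l_t − c^l_t z^l_t)] if and only if it satisfies Σ_t u_t ≥ Σ_t (q^u_t + β^u_t(Γ)) and Σ_t l_t ≤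 Σ_t (q^l_t − β^l_t(Γ)), where β^u_t(Γ) = max(c^u_t − c^u_(t*), 0) + Γ·c^u_(t*) and β^l_t(Γ) = max(c^l_t − c^l_(t*), 0) + Γ·c^l_(t*). Consequently, the feasible regions of the robust problem (RP) and of its reformulation (RP') coincide, so the two problems are equivalent. -/
/-!
The linear program "maximize `∑ c t * z t` over the budget set `Z(Γ)`" is a fractional knapsack
with unit weights, and its optimal value is `∑ t, (max (c t - τ) 0 + Γ * τ)` where `τ = c_(t*)`
is the critical cost. The bound (`sum_mul_le_budget`) is weak duality with multiplier `τ`: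
`c t * z t ≤ max (c t - τ) 0 + τ * z t`, summed over `t`. It is attained by the greedy vector
(`exists_budget_maximizer`): put `1` on the `t* - 1` largest costs and the remaining budget
`Γ H - (t* - 1) ∈ [0, 1]` on the critical one. The upper and lower robust constraints say that a
constant dominates this maximum, so each of them is equivalent to its finite counterpart.
-/

/-- Weak duality for the budget set, with any nonnegative multiplier `τ`. -/
lemma sum_mul_le_budget {H : ℕ} {Γ τ : ℝ} (c z : Fin H → ℝ) (hτ : 0 ≤ τ)
    (hz : ∀ t, 0 ≤ z t ∧ z t ≤ 1) (hs : ∑ t, z t ≤ Γ * (H : ℝ)) :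
    ∑ t, c t * z t ≤ ∑ t, (max (c t - τ) 0 + Γ * τ) := by
  have h1 : ∑ t, c t * z t ≤ ∑ t, (max (c t - τ) 0 + τ * z t) := by
    refine Finset.sum_le_sum fun t _ => ?_
    have ha := le_max_left (c t - τ) 0
    have hb := le_max_right (c t - τ) 0
    nlinarith [mul_le_mul_of_nonneg_right ha (hz t).1,
      mul_le_mul_of_nonneg_left (hz t).2 hb]
  have h2 := mul_le_mul_of_nonneg_left hs hτ
  simp only [Finset.sum_add_distrib, ← Finset.mul_sum, Finset.sum_const, Finset.card_univ,
    Fintype.card_fin, nsmul_eq_mul] at h1 ⊢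
  linarith

/-- The greedy vector is feasible and attains the dual bound at the critical cost `c (σ j)`. -/
lemma exists_budget_maximizer {H : ℕ} {Γ : ℝ} (hΓ0 : 0 ≤ Γ) (c : Fin H → ℝ)
    (σ : Equiv.Perm (Fin H)) (hσ : Antitone (c ∘ σ)) (j : Fin H)
    (hj : (j : ℕ) + 1 = max ⌈Γ * (H : ℝ)⌉₊ 1) :
    ∃ z : Fin H → ℝ, (∀ t, 0 ≤ z t ∧ z t ≤ 1) ∧ ∑ t, z t ≤ Γ * (H : ℝ) ∧
      ∑ t, c t * z t = ∑ t, (max (c t - c (σ j)) 0 + Γ * c (σ j)) := by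
  have hB : 0 ≤ Γ * (H : ℝ) := by positivity
  have hle : Γ * (H : ℝ) ≤ (j : ℕ) + 1 := by
    have h : ⌈Γ * (H : ℝ)⌉₊ ≤ (j : ℕ) + 1 := hj ▸ le_max_left _ _
    exact_mod_cast Nat.ceil_le.1 h
  have hge : ((j : ℕ) : ℝ) ≤ Γ * (H : ℝ) := by
    rcases Nat.eq_zero_or_pos (j : ℕ) with h0 | h0
    · simpa [h0] using hB
    · have h : (j : ℕ) < ⌈Γ * (H : ℝ)⌉₊ := by omega
      exact (Nat.lt_ceil.1 h).le
  -- the greedy vector in sorted coordinates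
  let w : Fin H → ℝ := fun i =>
    (if i < j then 1 else 0) + (if i = j then Γ * (H : ℝ) - (j : ℕ) else 0)
  have hw : ∑ i, w i = Γ * (H : ℝ) := by
    have hcard : (Finset.univ.filter (fun i : Fin H => i < j)).card = (j : ℕ) := by
      rw [← Fin.card_Iio j]
      congr 1
      ext i
      simp
    simp [w, Finset.sum_add_distrib, Finset.sum_boole, hcard]
  have hz : ∑ t, w (σ.symm t) = Γ * (H : ℝ) := by
    rw [Equiv.sum_comp σ.symm w, hw]
  refine ⟨fun t => w (σ.symm t), fun t => ?_, hz.le, ?_⟩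
  · rcases lt_trichotomy (σ.symm t) j with h | h | h
    · simp [w, h, h.ne]
    · simp only [w, h, lt_irrefl, if_true, if_false]
      constructor <;> linarith
    · simp [w, h.not_gt, h.ne']
  · -- complementary slackness: the pointwise duality inequality is an equality at `w`
    have hpt : ∀ t, c t * w (σ.symm t) = max (c t - c (σ j)) 0 + c (σ j) * w (σ.symm t) := by
      intro t
      obtain ⟨i, rfl⟩ := σ.surjective t
      rw [Equiv.symm_apply_apply]
      rcases lt_trichotomy i j with h | h | h
      · have := hσ h.le
        simp only [Function.comp_apply] at this
        rw [max_eq_left (by linarith)]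
        simp [w, h, h.ne]
      · subst h
        simp
      · have := hσ h.le
        simp only [Function.comp_apply] at this
        rw [max_eq_right (by linarith)]
        simp [w, h.not_gt, h.ne']
    rw [Finset.sum_congr rfl fun t _ => hpt t]
    simp only [Finset.sum_add_distrib, ← Finset.mul_sum, hz, Finset.sum_const, Finset.card_univ,
      Fintype.card_fin, nsmul_eq_mul]
    ring

/-- **Proposition 2 (equivalence of (RP) and (RP')).** With `cᵘ, cˡ > 0` componentwise,
permutations `σᵘ, σˡ` sorting them in nonincreasing order, `Γ ∈ [0,1]`, and `j` the
index with `j + 1 = t* = max(⌈ΓH⌉, 1)`, a band `(l, u)` satisfies the semi-infinite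
robust constraints
`∀ zᵘ ∈ Z(Γ), ∑ t, u t ≥ ∑ t, (qᵘ t + cᵘ t * zᵘ t)` and
`∀ zˡ ∈ Z(Γ), ∑ t, l t ≤ ∑ t, (qˡ t - cˡ t * zˡ t)`
if and only if it satisfies the two finite inequalities
`∑ t, u t ≥ ∑ t, (qᵘ t + βᵘ t)` and `∑ t, l t ≤ ∑ t, (qˡ t - βˡ t)`, where
`βᵘ t = max (cᵘ t - cᵘ_(t*)) 0 + Γ·cᵘ_(t*)` and `βˡ t = max (cˡ t - cˡ_(t*)) 0 + Γ·cˡ_(t*)`.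
Hence the feasible regions of (RP) and (RP') coincide. -/
theorem rp_equiv_rp_reformulated
    (H : ℕ) (hH : 1 ≤ H) (Γ : ℝ) (hΓ0 : 0 ≤ Γ) (hΓ1 : Γ ≤ 1)
    (qu ql cu cl : Fin H → ℝ) (hcu : ∀ t, 0 < cu t) (hcl : ∀ t, 0 < cl t)
    (σu σl : Equiv.Perm (Fin H)) (hσu : Antitone (cu ∘ σu)) (hσl : Antitone (cl ∘ σl))
    (j : Fin H) (hj : (j : ℕ) + 1 = max ⌈Γ * (H : ℝ)⌉₊ 1)
    (l u : Fin H → ℝ) :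
    ((∀ z : Fin H → ℝ, (∀ t, 0 ≤ z t ∧ z t ≤ 1) → ∑ t, z t ≤ Γ * (H : ℝ) →
        ∑ t, (qu t + cu t * z t) ≤ ∑ t, u t) ∧
     (∀ z : Fin H → ℝ, (∀ t, 0 ≤ z t ∧ z t ≤ 1) → ∑ t, z t ≤ Γ * (H : ℝ) →
        ∑ t, l t ≤ ∑ t, (ql t - cl t * z t))) ↔
    ((∑ t, (qu t + (max (cu t - cu (σu j)) 0 + Γ * cu (σu j))) ≤ ∑ t, u t) ∧
     (∑ t, l t ≤ ∑ t, (ql t - (max (cl t - cl (σl j)) 0 + Γ * cl (σl j))))) := by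
  have bound : ∀ (c : Fin H → ℝ) (σ : Equiv.Perm (Fin H)), (∀ t, 0 < c t) → ∀ z : Fin H → ℝ,
      (∀ t, 0 ≤ z t ∧ z t ≤ 1) → ∑ t, z t ≤ Γ * (H : ℝ) →
      ∑ t, c t * z t ≤ ∑ t, (max (c t - c (σ j)) 0 + Γ * c (σ j)) :=
    fun c σ hc z hz hs => sum_mul_le_budget c z (hc _).le hz hs
  obtain ⟨zu, hzu, hsu, hmu⟩ := exists_budget_maximizer hΓ0 cu σu hσu j hj
  obtain ⟨zl, hzl, hsl, hml⟩ := exists_budget_maximizer hΓ0 cl σl hσl j hj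
  simp only [Finset.sum_add_distrib (f := qu), Finset.sum_sub_distrib ql]
  constructor
  · rintro ⟨h1, h2⟩
    have h1 := h1 zu hzu hsu
    have h2 := h2 zl hzl hsl
    rw [hmu] at h1
    rw [hml] at h2
    exact ⟨h1, h2⟩
  · rintro ⟨h1, h2⟩
    refine ⟨fun z hz hs => ?_, fun z hz hs => ?_⟩
    · linarith [bound cu σu hcu z hz hs]
    · linarith [bound cl σl hcl z hz hs]
end

section
/- Let H ≥ 1, let c : Fin H → ℝ with c_t > 0 for all t, and let σ be a permutation of Fin H such that c∘σ is nonincreasing; write c_(j) = c(σ(j)) for the j-th largest value of c. For Γ ∈ [0,1] set t*(Γ) = max(⌈ΓH⌉, 1) and β_t(Γ) = max(c_t − c_(t*(Γ)), 0) + Γ·c_(t*(Γ)). Then for all 0 ≤ Γ₁ ≤ Γ₂ ≤ 1, one has Σ_{t=1}^H β_t(Γ₁) ≤ Σ_{t=1}^H β_t(Γ₂). Consequently, any band (l, u) satisfying Σ_t u_t ≥ Σ_t (q_t + β^u_t(Γ₂)) and Σ_t l_t ≤ Σ_t (q^l_t − β^l_t(Γ₂)) also satisfies the corresponding inequalities with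 Γ₁ in place of Γ₂; that is, the feasible region of the reformulated robust problem (RP') is decreasing (with respect to set inclusion) in Γ. -/
/-!
Write `φ lam Γ = ∑ t, max (c t - lam) 0 + Γ H lam`, the Lagrangian dual function of the budgeted
maximum, and `lamᵢ = c_(t*(Γᵢ))`. The two sums in the claim are `φ lam₁ Γ₁` and `φ lam₂ Γ₂`.
Since `t*` is monotone in `Γ` and `c ∘ σ` is antitone, `lam₂ ≤ lam₁`. Lowering the threshold from
`lam₁` to `lam₂` raises each of the `t*(Γ₁)` largest terms by the full `lam₁ - lam₂` and lowers
none (`card_mul_sub_le_sum_max_sub`). As `t*(Γ₁) ≥ Γ₁ H`, this gives `φ lam₁ Γ₁ ≤ φ lam₂ Γ₁`,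
and `φ lam₂ Γ₁ ≤ φ lam₂ Γ₂` because `lam₂ > 0`.
-/

/-- Lowering the threshold from the `(j + 1)`-st largest value of `c` to `lam` increases the sum of
the excesses by at least `j + 1` times the decrease. -/
lemma card_mul_sub_le_sum_max_sub {H : ℕ} (c : Fin H → ℝ) (σ : Equiv.Perm (Fin H))
    (hσ : Antitone (c ∘ σ)) (j : Fin H) (lam : ℝ) (hlam : lam ≤ c (σ j)) :
    ((j : ℝ) + 1) * (c (σ j) - lam)
      ≤ ∑ t, (max (c t - lam) 0 - max (c t - c (σ j)) 0) := by
  rw [← Equiv.sum_comp σ]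
  have hcard : ((j : ℝ) + 1) * (c (σ j) - lam)
      = ∑ _i ∈ Finset.Iic j, (c (σ j) - lam) := by
    simp [mul_sub]
  rw [hcard]
  calc ∑ _i ∈ Finset.Iic j, (c (σ j) - lam)
      ≤ ∑ i ∈ Finset.Iic j, (max (c (σ i) - lam) 0 - max (c (σ i) - c (σ j)) 0) := by
        refine Finset.sum_le_sum fun i hi => ?_
        have hij : c (σ j) ≤ c (σ i) := hσ (Finset.mem_Iic.1 hi)
        rw [max_eq_left (by linarith), max_eq_left (by linarith)]
        linarith
    _ ≤ ∑ i, (max (c (σ i) - lam) 0 - max (c (σ i) - c (σ j)) 0) := by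
        refine Finset.sum_le_sum_of_subset_of_nonneg (Finset.subset_univ _) fun i _ _ => ?_
        exact sub_nonneg.2 (max_le_max_right 0 (by linarith))


/-- **Remark 2 (feasible region of (RP') decreasing in `Γ`).** Let `c > 0`
componentwise, `σ` a permutation sorting `c` in nonincreasing order, and for
`Γ ∈ [0,1]` let `t*(Γ) = max(⌈ΓH⌉, 1)` and `β t (Γ) = max (c t - c_(t*(Γ))) 0 + Γ·c_(t*(Γ))`.
Here `j₁, j₂` are the indices with `jᵢ + 1 = t*(Γᵢ)`. Then for `0 ≤ Γ₁ ≤ Γ₂ ≤ 1`,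
`∑ t, β t (Γ₁) ≤ ∑ t, β t (Γ₂)`; consequently any band satisfying the (RP')
constraints at level `Γ₂` (on the upper side with quantiles `q`, or on the lower side)
also satisfies them at level `Γ₁`. -/
theorem rp_feasible_region_decreasing_in_gamma
    (H : ℕ) (hH : 1 ≤ H) (c : Fin H → ℝ) (hc : ∀ t, 0 < c t)
    (σ : Equiv.Perm (Fin H)) (hσ : Antitone (c ∘ σ))
    (Γ₁ Γ₂ : ℝ) (h0 : 0 ≤ Γ₁) (h12 : Γ₁ ≤ Γ₂) (h1 : Γ₂ ≤ 1)
    (j₁ j₂ : Fin H)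
    (hj₁ : (j₁ : ℕ) + 1 = max ⌈Γ₁ * (H : ℝ)⌉₊ 1)
    (hj₂ : (j₂ : ℕ) + 1 = max ⌈Γ₂ * (H : ℝ)⌉₊ 1) :
    (∑ t, (max (c t - c (σ j₁)) 0 + Γ₁ * c (σ j₁))
        ≤ ∑ t, (max (c t - c (σ j₂)) 0 + Γ₂ * c (σ j₂))) ∧
    (∀ q u : Fin H → ℝ,
      ∑ t, (q t + (max (c t - c (σ j₂)) 0 + Γ₂ * c (σ j₂))) ≤ ∑ t, u t →
      ∑ t, (q t + (max (c t - c (σ j₁)) 0 + Γ₁ * c (σ j₁))) ≤ ∑ t, u t) ∧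
    (∀ q l : Fin H → ℝ,
      ∑ t, l t ≤ ∑ t, (q t - (max (c t - c (σ j₂)) 0 + Γ₂ * c (σ j₂))) →
      ∑ t, l t ≤ ∑ t, (q t - (max (c t - c (σ j₁)) 0 + Γ₁ * c (σ j₁)))) := by
  have key : ∑ t, (max (c t - c (σ j₁)) 0 + Γ₁ * c (σ j₁))
      ≤ ∑ t, (max (c t - c (σ j₂)) 0 + Γ₂ * c (σ j₂)) := by
    have hj : j₁ ≤ j₂ := by
      have hceil : ⌈Γ₁ * (H : ℝ)⌉₊ ≤ ⌈Γ₂ * (H : ℝ)⌉₊ := Nat.ceil_mono (by gcongr)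
      rw [Fin.le_def]
      omega
    have hle : c (σ j₂) ≤ c (σ j₁) := hσ hj
    have hbudget : Γ₁ * (H : ℝ) ≤ (j₁ : ℝ) + 1 := by
      have hnat : ⌈Γ₁ * (H : ℝ)⌉₊ ≤ (j₁ : ℕ) + 1 := by omega
      exact_mod_cast Nat.ceil_le.1 hnat
    have hgain := card_mul_sub_le_sum_max_sub c σ hσ j₁ _ hle
    have hdual : Γ₁ * (H : ℝ) * (c (σ j₁) - c (σ j₂))
        ≤ ((j₁ : ℝ) + 1) * (c (σ j₁) - c (σ j₂)) :=
      mul_le_mul_of_nonneg_right hbudget (sub_nonneg.2 hle)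
    have hslope : Γ₁ * ((H : ℝ) * c (σ j₂)) ≤ Γ₂ * ((H : ℝ) * c (σ j₂)) :=
      mul_le_mul_of_nonneg_right h12 (mul_nonneg (Nat.cast_nonneg H) (hc _).le)
    rw [Finset.sum_sub_distrib] at hgain
    simp only [Finset.sum_add_distrib, Finset.sum_const, Finset.card_univ, Fintype.card_fin,
      nsmul_eq_mul]
    linarith
  refine ⟨key, fun q u h => ?_, fun q l h => ?_⟩
  · rw [Finset.sum_add_distrib] at h ⊢
    linarith
  · rw [Finset.sum_sub_distrib] at h ⊢
    linarith
end
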